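/- Let f : ℝ → ℝ be exponentially convex. Then there exists a nonnegative Borel measure σ on ℝ such that f(t) = ∫_ℝ e^{tμ} dσ(μ) for every real t (in particular, this integral is finite for every real t), and this representing measure σ is unique. -/

import Mathlib

open scoped ComplexOrder

/-- A function `f : ℝ → ℝ` is *exponentially convex* if it is continuous, nonnegative,
and for every `N`, all reals `t 1, …, t N` and complex numbers `ξ 1, …, ξ N`, the sum
`∑_{r,s} f (t r + t s) * ξ r * conj (ξ s)` is a nonnegative real number. -/
def ExponentiallyConvex (f : ℝ → ℝ) : Prop :=
  Continuous f ∧ (∀ t : ℝ, 0 ≤ f t) ∧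
    ∀ (N : ℕ) (t : Fin N → ℝ) (ξ : Fin N → ℂ),
      0 ≤ ∑ r : Fin N, ∑ s : Fin N, (f (t r + t s) : ℂ) * ξ r * (starRingEnd ℂ) (ξ s)

/-!
Integration against a measure with Laplace transform `f` must send the monomial with exponent `q` in
`ℝ[ℚ]`, viewed as the exponential `exp (q x)`, to `f q`. Let `L` be the linear functional on `ℝ[ℚ]`
with these values. Exponential convexity says that `L (a * a) ≥ 0`. Clearing denominators, an
exponential sum with rational exponents is `exp (b x) * r (exp (h x))` for a polynomial `r`; if it
is nonnegative, then `y ↦ r (y ^ 2)` is nonnegative on `ℝ`, hence a sum of squares, and so the sum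
itself is a sum of squares in `ℝ[ℚ]`. Thus `L` is nonnegative on nonnegative exponential sums.

Such an `L` extends to a positive functional on compactly supported functions (M. Riesz), which is
integration against a Radon measure (Riesz–Markov–Kakutani). This measure also represents `L`
because no mass escapes to infinity: a square `b ^ 2` is negligible at infinity compared with
`(b * p) ^ 2`, where `p = exp x + exp (-x)`. The passage from rational to real exponents is by
continuity. The measure is unique since its characteristic function is determined by analytic
continuation of `f` to the imaginary axis.
-/

open MeasureTheory Filter Topology Asymptotics Polynomial
open scoped AddMonoidAlgebra CompactlySupported

section SumsOfSquares

theorem isSumSq_map {R S F : Type*} [NonUnitalNonAssocSemiring R] [NonUnitalNonAssocSemiring S]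
    [FunLike F R S] [NonUnitalRingHomClass F R S] (φ : F) {a : R} (ha : IsSumSq a) :
    IsSumSq (φ a) := by
  induction ha with
  | zero => simp
  | sq_add b _ ih => simpa only [map_add, map_mul] using ih.sq_add (φ b)

theorem eval_nonneg_of_mul_left {q r : ℝ[X]} (hq : q ≠ 0) (hq_nonneg : ∀ x, 0 ≤ q.eval x)
    (hqr : ∀ x, 0 ≤ (q * r).eval x) (x : ℝ) : 0 ≤ r.eval x := by
  have hdense : Dense {y | ¬ q.IsRoot y} := (finite_setOfPred_isRoot hq).countable.dense_compl ℝ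
  refine (isClosed_Ici.preimage r.continuous).closure_subset_iff.2 (fun y hy ↦ ?_) (hdense x)
  have hqy : 0 < q.eval y := (hq_nonneg y).lt_of_ne' hy
  exact nonneg_of_mul_nonneg_right (eval_mul (R := ℝ) ▸ hqr y) hqy

theorem sq_X_sub_C_dvd_of_eval_nonneg {p : ℝ[X]} (hp : ∀ x, 0 ≤ p.eval x) {a : ℝ}
    (ha : p.IsRoot a) : (X - C a) ^ 2 ∣ p := by
  rcases eq_or_ne p 0 with rfl | hp0
  · exact dvd_zero _
  have hmin : IsLocalMin (fun x ↦ p.eval x) a := .of_forall fun x ↦ ha.eq_zero.trans_le (hp x)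
  have hderiv : p.derivative.IsRoot a := by simpa using hmin.deriv_eq_zero
  exact (le_rootMultiplicity_iff hp0).1 ((one_lt_rootMultiplicity_iff_isRoot hp0).2 ⟨ha, hderiv⟩)

theorem sq_add_sq_dvd_of_aeval_eq_zero {p : ℝ[X]} (hp : ∀ x, 0 ≤ p.eval x) {z : ℂ}
    (hz : aeval z p = 0) : (X - C z.re) ^ 2 + C z.im ^ 2 ∣ p := by
  by_cases him : z.im = 0
  · have hz_real : z = algebraMap ℝ ℂ z.re := Complex.ext rfl (by simpa using him)
    have hroot : p.IsRoot z.re := by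
      rw [hz_real, aeval_algebraMap_apply] at hz
      simpa using hz
    simpa [him] using sq_X_sub_C_dvd_of_eval_nonneg hp hroot
  · convert! p.quadratic_dvd_of_aeval_eq_zero_im_ne_zero hz him using 1
    rw [Complex.sq_norm, Complex.normSq_apply]
    simp only [map_add, map_mul, C_ofNat]
    ring

theorem isSumSq_of_eval_nonneg {p : ℝ[X]} (hp : ∀ x, 0 ≤ p.eval x) : IsSumSq p := by
  induction hn : p.natDegree using Nat.strong_induction_on generalizing p with
  | _ n ih =>
  by_cases hdeg : p.natDegree = 0
  · obtain ⟨c, rfl⟩ := natDegree_eq_zero.1 hdeg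
    have hc : 0 ≤ c := by simpa using hp 0
    rw [← Real.mul_self_sqrt hc, C_mul]
    exact .mul_self _
  obtain ⟨z, hz⟩ := IsAlgClosed.exists_aeval_eq_zero ℂ p (mt natDegree_eq_of_degree_eq_some hdeg)
  set q : ℝ[X] := (X - C z.re) ^ 2 + C z.im ^ 2 with hq
  have hq_deg : q.natDegree = 2 := by rw [hq]; compute_degree!
  have hq_ne : q ≠ 0 := by rintro h; simp [h] at hq_deg
  obtain ⟨r, hr⟩ : q ∣ p := sq_add_sq_dvd_of_aeval_eq_zero hp hz
  have hr_nonneg : ∀ x, 0 ≤ r.eval x :=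
    eval_nonneg_of_mul_left hq_ne (fun x ↦ by simpa [hq] using by positivity) (hr ▸ hp)
  have hr_ne : r ≠ 0 := by rintro rfl; simp [hr] at hdeg
  have hr_deg : r.natDegree < n := by
    rw [← hn, hr, natDegree_mul hq_ne hr_ne, hq_deg]
    omega
  have hq_sumSq : IsSumSq q := (IsSquare.sq _).isSumSq.add (IsSquare.sq _).isSumSq
  exact hr ▸ hq_sumSq.mul (ih _ hr_deg hr_nonneg rfl)

end SumsOfSquares

section PositiveExtension

theorem exists_positive_extension {E V W : Type*} [AddCommGroup E] [PartialOrder E]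
    [IsOrderedAddMonoid E] [Module ℝ E] [PosSMulMono ℝ E] [AddCommGroup V] [Module ℝ V]
    [AddCommGroup W] [Module ℝ W] (e : V →ₗ[ℝ] E) (j : W →ₗ[ℝ] E) (L : V →ₗ[ℝ] ℝ)
    (hL : ∀ v, 0 ≤ e v → 0 ≤ L v) (hdom : ∀ w, ∃ v, 0 ≤ e v + j w) :
    ∃ Λ : W →ₗ[ℝ] ℝ, ∀ v w, 0 ≤ e v + j w → 0 ≤ L v + Λ w := by
  -- On `V × W` the data glue to a functional even where the ranges of `e` and `j` meet.
  let s : PointedCone ℝ (V × W) := (PointedCone.positive ℝ E).comap (e.coprod j)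
  have mem_s (v : V) (w : W) : (v, w) ∈ s ↔ 0 ≤ e v + j w := by simp [s]
  obtain ⟨g, hg_ext, hg_nonneg⟩ :=
    riesz_extension s ((L ∘ₗ .fst ℝ V W).toPMap (LinearMap.ker (.snd ℝ V W)))
      (by
        rintro ⟨⟨v, w⟩, rfl : w = 0⟩ hv
        exact hL v (by simpa [mem_s] using hv))
      (by
        rintro ⟨v, w⟩
        obtain ⟨v', hv'⟩ := hdom w
        exact ⟨⟨(v' - v, 0), rfl⟩, by simpa [mem_s] using hv'⟩)
  refine ⟨g ∘ₗ .inr ℝ V W, fun v w hvw ↦ ?_⟩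
  have hg_fst : g (v, 0) = L v := hg_ext ⟨(v, 0), rfl⟩
  have := hg_nonneg _ ((mem_s v w).2 hvw)
  rwa [← Prod.fst_add_snd (v, w), map_add, hg_fst] at this

end PositiveExtension

section PositiveFunctionals

variable {X : Type*} [TopologicalSpace X] [LocallyCompactSpace X]

section RegularSpace

variable [RegularSpace X]

theorem exists_compactlySupported_approx {F G : C(X, ℝ)} (hF : 0 ≤ F) (hG : 0 ≤ G)
    (hFG : F =o[cocompact X] G) {ε : ℝ} (hε : 0 < ε) :
    ∃ φ : C_c(X, ℝ), (∀ x, 0 ≤ φ x) ∧ (∀ x, φ x ≤ F x) ∧ ∀ x, F x ≤ φ x + ε * G x := by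
  obtain ⟨K, hK, hKF⟩ := mem_cocompact.1 (hFG.bound hε)
  obtain ⟨χ, hχ_one, -, hχ_supp, hχ⟩ :=
    exists_continuous_one_zero_of_isCompact hK isClosed_empty (Set.disjoint_empty K)
  refine ⟨⟨χ * F, hχ_supp.mul_right⟩, fun x ↦ mul_nonneg (hχ x).1 (hF x),
    fun x ↦ mul_le_of_le_one_left (hF x) (hχ x).2, fun x ↦ ?_⟩
  have hFx : 0 ≤ F x := hF x
  have hGx : 0 ≤ G x := hG x
  change F x ≤ χ x * F x + ε * G x
  by_cases hx : x ∈ K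
  · simpa [hχ_one hx] using mul_nonneg hε.le hGx
  · have hbound : ‖F x‖ ≤ ε * ‖G x‖ := hKF hx
    rw [Real.norm_of_nonneg hFx, Real.norm_of_nonneg hGx] at hbound
    exact hbound.trans (le_add_of_nonneg_left (mul_nonneg (hχ x).1 hFx))

variable [MeasurableSpace X] [BorelSpace X]

theorem lintegral_ofReal_le_of_forall_compactlySupported {μ : Measure X}
    [IsFiniteMeasureOnCompacts μ] {F G : C(X, ℝ)} (hF : 0 ≤ F) (hG : 0 ≤ G)
    (hFG : F =o[cocompact X] G) {c : ℝ}
    (hc : ∀ φ : C_c(X, ℝ), (∀ x, φ x ≤ F x) → ∫ x, φ x ∂μ ≤ c) :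
    ∫⁻ x, ENNReal.ofReal (F x) ∂μ ≤ ENNReal.ofReal c := by
  have hε (n : ℕ) : (0 : ℝ) < 1 / (n + 1) := by positivity
  choose φ hφ_nonneg hφ_le hφ_approx using
    fun n : ℕ ↦ exists_compactlySupported_approx hF hG hFG (hε n)
  have hφ_lim (x : X) : Tendsto (fun n ↦ φ n x) atTop (𝓝 (F x)) := by
    have hlow : Tendsto (fun n : ℕ ↦ F x - 1 / ((n : ℝ) + 1) * G x) atTop (𝓝 (F x)) := by
      simpa using (tendsto_one_div_add_atTop_nhds_zero_nat.mul_const (G x)).const_sub (F x)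
    exact tendsto_of_tendsto_of_tendsto_of_le_of_le hlow tendsto_const_nhds
      (fun n ↦ sub_le_iff_le_add.2 (hφ_approx n x)) fun n ↦ hφ_le n x
  have hφ_lintegral (n : ℕ) : ∫⁻ x, ENNReal.ofReal (φ n x) ∂μ ≤ ENNReal.ofReal c := by
    rw [← ofReal_integral_eq_lintegral_ofReal (φ n).integrable (.of_forall (hφ_nonneg n))]
    exact ENNReal.ofReal_le_ofReal (hc (φ n) (hφ_le n))
  calc ∫⁻ x, ENNReal.ofReal (F x) ∂μ
      = ∫⁻ x, liminf (fun n ↦ ENNReal.ofReal (φ n x)) atTop ∂μ :=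
        lintegral_congr fun x ↦ (ENNReal.tendsto_ofReal (hφ_lim x)).liminf_eq.symm
    _ ≤ liminf (fun n ↦ ∫⁻ x, ENNReal.ofReal (φ n x) ∂μ) atTop :=
        lintegral_liminf_le fun n ↦ (φ n).continuous.measurable.ennreal_ofReal
    _ ≤ ENNReal.ofReal c := liminf_le_of_le (by isBoundedDefault) fun b hb ↦ by
        obtain ⟨n, hn⟩ := hb.exists
        exact hn.trans (hφ_lintegral n)

theorem integrable_and_integral_eq_of_isLittleO {V : Type*} [AddCommGroup V] [Module ℝ V]
    {e : V →ₗ[ℝ] C(X, ℝ)} {L : V →ₗ[ℝ] ℝ} {μ : Measure X} [IsFiniteMeasureOnCompacts μ]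
    (hμ : ∀ v (φ : C_c(X, ℝ)), (∀ x, 0 ≤ e v x + φ x) → 0 ≤ L v + ∫ x, φ x ∂μ)
    {v w : V} (hv : 0 ≤ e v) (hw : 0 ≤ e w) (hvw : e v =o[cocompact X] e w) :
    Integrable (e v) μ ∧ ∫ x, e v x ∂μ = L v := by
  have hL_nonneg : 0 ≤ L v := by simpa using hμ v 0 fun x ↦ by simpa using hv x
  have integral_le (φ : C_c(X, ℝ)) (hφ : ∀ x, φ x ≤ e v x) : ∫ x, φ x ∂μ ≤ L v := by
    have := hμ v (-φ) fun x ↦ by simpa using hφ x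
    simpa [integral_neg] using this
  have lintegral_le := lintegral_ofReal_le_of_forall_compactlySupported hv hw hvw integral_le
  have hint : Integrable (e v) μ := by
    refine ⟨(e v).continuous.aestronglyMeasurable, ?_⟩
    exact (hasFiniteIntegral_iff_ofReal (f := e v) (.of_forall hv)).2 <|
      lintegral_le.trans_lt ENNReal.ofReal_lt_top
  refine ⟨hint, le_antisymm ?_ ?_⟩
  · rwa [← ofReal_integral_eq_lintegral_ofReal hint (.of_forall hv),
      ENNReal.ofReal_le_ofReal_iff hL_nonneg] at lintegral_le
  have le_add (ε : ℝ) (hε : 0 < ε) : L v ≤ ∫ x, e v x ∂μ + ε * L w := by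
    obtain ⟨φ, -, hφ_le, hφ_approx⟩ := exists_compactlySupported_approx hv hw hvw hε
    have hpos : 0 ≤ L (ε • w - v) + ∫ x, φ x ∂μ :=
      hμ _ φ fun x ↦ by simpa using by linarith [hφ_approx x]
    have hmono : ∫ x, φ x ∂μ ≤ ∫ x, e v x ∂μ := integral_mono φ.integrable hint hφ_le
    simp only [map_sub, map_smul, smul_eq_mul] at hpos
    linarith
  have hlim : Tendsto (fun ε ↦ ∫ x, e v x ∂μ + ε * L w) (𝓝[>] 0) (𝓝 (∫ x, e v x ∂μ)) :=
    tendsto_nhdsWithin_of_tendsto_nhds (Continuous.tendsto' (by fun_prop) _ _ (by simp))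
  exact ge_of_tendsto hlim (eventually_mem_nhdsWithin.mono fun ε hε ↦ le_add ε hε)

end RegularSpace

variable [T2Space X] [MeasurableSpace X] [BorelSpace X]

theorem exists_measure_positive_extension {V : Type*} [AddCommGroup V] [Module ℝ V]
    (e : V →ₗ[ℝ] C(X, ℝ)) (L : V →ₗ[ℝ] ℝ) (hL : ∀ v, 0 ≤ e v → 0 ≤ L v) {u : V} (hu : 1 ≤ e u) :
    ∃ μ : Measure X, IsFiniteMeasureOnCompacts μ ∧
      ∀ v (φ : C_c(X, ℝ)), (∀ x, 0 ≤ e v x + φ x) → 0 ≤ L v + ∫ x, φ x ∂μ := by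
  let j : C_c(X, ℝ) →ₗ[ℝ] C(X, ℝ) :=
    { toFun := (↑), map_add' _ _ := rfl, map_smul' _ _ := rfl }
  have hdom (φ : C_c(X, ℝ)) : ∃ v, 0 ≤ e v + j φ := by
    obtain ⟨c, hc⟩ := φ.hasCompactSupport.exists_bound_of_continuous φ.continuous
    refine ⟨c • u, fun x ↦ ?_⟩
    have hφx : |φ x| ≤ c := hc x
    have hux : 1 ≤ e u x := hu x
    have hcu : c ≤ c * e u x := le_mul_of_one_le_right ((abs_nonneg _).trans hφx) hux
    have hpos : 0 ≤ c * e u x + φ x := by linarith [neg_le_of_abs_le hφx]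
    simpa [j] using hpos
  obtain ⟨Λ, hΛ⟩ := exists_positive_extension e j L hL hdom
  let Λ' : C_c(X, ℝ) →ₚ[ℝ] ℝ := .mk₀ Λ fun φ hφ ↦ by
    simpa using hΛ 0 φ fun x ↦ by simpa [j] using hφ x
  refine ⟨RealRMK.rieszMeasure Λ', inferInstance, fun v φ hvφ ↦ ?_⟩
  rw [RealRMK.integral_rieszMeasure]
  exact hΛ v φ hvφ

-- Marshall's generalization of Haviland's theorem.
theorem exists_measure_forall_integral_eq {A : Type*} [CommRing A] [Algebra ℝ A]
    (e : A →ₐ[ℝ] C(X, ℝ)) (L : A →ₗ[ℝ] ℝ) (hL : ∀ a, 0 ≤ e a → 0 ≤ L a) {p : A}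
    (hp : Tendsto (e p) (cocompact X) atTop) :
    ∃ μ : Measure X, ∀ a, Integrable (e a) μ ∧ ∫ x, e a x ∂μ = L a := by
  obtain ⟨μ, _, hμ⟩ := exists_measure_positive_extension e.toLinearMap L hL (u := 1) (by simp)
  have hsq_nonneg (b : A) : 0 ≤ e (b ^ 2) := fun x ↦ by simpa using sq_nonneg (e b x)
  have hlittleO (b : A) : e (b ^ 2) =o[cocompact X] e ((b * p) ^ 2) := by
    have hone : (fun _ ↦ 1 : X → ℝ) =o[cocompact X] fun x ↦ e p x ^ 2 :=
      isLittleO_const_left.2 <| .inr <| tendsto_norm_atTop_atTop.comp <|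
        (tendsto_pow_atTop two_ne_zero).comp hp
    have hmul := (isBigO_refl (fun x ↦ e b x ^ 2) (cocompact X)).mul_isLittleO hone
    exact hmul.congr (fun x ↦ by simp) fun x ↦ by simp [mul_pow]
  have hsq (b : A) : Integrable (e (b ^ 2)) μ ∧ ∫ x, e (b ^ 2) x ∂μ = L (b ^ 2) :=
    integrable_and_integral_eq_of_isLittleO hμ (hsq_nonneg b) (hsq_nonneg (b * p)) (hlittleO b)
  refine ⟨μ, fun a ↦ ?_⟩
  obtain ⟨b, c, rfl⟩ : ∃ b c : A, a = b ^ 2 - c ^ 2 := by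
    refine ⟨(1 / 2 : ℝ) • (a + 1), (1 / 2 : ℝ) • (a - 1), ?_⟩
    have hadd : (1 / 2 : ℝ) • (a + 1) + (1 / 2 : ℝ) • (a - 1) = a := by module
    have hsub : (1 / 2 : ℝ) • (a + 1) - (1 / 2 : ℝ) • (a - 1) = 1 := by module
    rw [sq_sub_sq, hadd, hsub, mul_one]
  obtain ⟨⟨hb_int, hb⟩, hc_int, hc⟩ := And.intro (hsq b) (hsq c)
  rw [map_sub, map_sub, ← hb, ← hc, ← integral_sub hb_int hc_int]
  exact ⟨hb_int.sub hc_int, rfl⟩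

end PositiveFunctionals

section ExponentialSums

theorem exists_eq_single_mul_aeval {R : Type*} [CommSemiring R] (v : R[ℚ]) :
    ∃ b h : ℚ, h ≠ 0 ∧ ∃ r : R[X], v = .single b 1 * aeval (.single h 1) r := by
  obtain ⟨d, hd⟩ :=
    IsLocalization.exist_integer_multiples_of_finset (nonZeroDivisors ℤ) v.coeff.support
  choose! n hn using hd
  obtain ⟨m, hm⟩ := (v.coeff.support.image n).bddBelow
  have hd_ne : ((d : ℤ) : ℚ) ≠ 0 := by exact_mod_cast nonZeroDivisors.coe_ne_zero d
  have hexponent (q : ℚ) (hq : q ∈ v.coeff.support) :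
      q = m / (d : ℤ) + (n q - m).toNat • (1 / (d : ℤ) : ℚ) := by
    have hmq : m ≤ n q := hm (by simpa using ⟨q, by simpa using hq, rfl⟩)
    have hcast : (((n q - m).toNat : ℤ) : ℚ) = n q - m := by
      rw [Int.toNat_sub_of_le hmq, Int.cast_sub]
    have hnq : (n q : ℚ) = (d : ℤ) * q := by simpa using hn q hq
    rw [nsmul_eq_mul, ← Int.cast_natCast, hcast, hnq]
    field_simp
    ring
  refine ⟨m / (d : ℤ), 1 / (d : ℤ), one_div_ne_zero hd_ne,
    ∑ q ∈ v.coeff.support, monomial (n q - m).toNat (v.coeff q), ?_⟩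
  calc v = ∑ q ∈ v.coeff.support, .single q (v.coeff q) := v.sum_coeff_single.symm
    _ = ∑ q ∈ v.coeff.support, .single (m / (d : ℤ)) 1 *
          aeval (.single (1 / (d : ℤ)) 1) (monomial (n q - m).toNat (v.coeff q)) :=
        Finset.sum_congr rfl fun q hq ↦ by
          simp only [aeval_monomial, AddMonoidAlgebra.single_pow, AddMonoidAlgebra.coe_algebraMap,
            Function.comp_apply, AddMonoidAlgebra.single_mul_single, zero_add, one_pow, one_mul,
            mul_one, Algebra.algebraMap_self_apply, ← hexponent q hq]
    _ = _ := by rw [map_sum, Finset.mul_sum]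

/-- The exponential sum `x ↦ ∑ q, v q * exp (q * x)` with rational exponents attached to
`v : ℝ[ℚ]`. -/
noncomputable def expSum : ℝ[ℚ] →ₐ[ℝ] C(ℝ, ℝ) :=
  AddMonoidAlgebra.lift ℝ C(ℝ, ℝ) ℚ
    { toFun q := ⟨fun x ↦ Real.exp (q.toAdd * x), by fun_prop⟩
      map_one' := by ext; simp
      map_mul' q r := by ext; simp [add_mul, Real.exp_add] }

@[simp]
theorem expSum_single_apply (q : ℚ) (c x : ℝ) :
    expSum (.single q c) x = c * Real.exp (q * x) := by
  simp [expSum]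

theorem expSum_aeval_single_apply (h : ℚ) (r : ℝ[X]) (x : ℝ) :
    expSum (aeval (.single h 1) r) x = r.eval (Real.exp (h * x)) := by
  rw [← aeval_algHom_apply, aeval_continuousMap_apply, expSum_single_apply, one_mul]

theorem isSumSq_expand_two_of_eval_nonneg {r : ℝ[X]} (hr : ∀ y > 0, 0 ≤ r.eval y) :
    IsSumSq (expand ℝ 2 r) := by
  have hr_Ici : Set.Ici 0 ⊆ {y | 0 ≤ r.eval y} :=
    closure_Ioi (0 : ℝ) ▸ (isClosed_Ici.preimage r.continuous).closure_subset_iff.2 hr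
  exact isSumSq_of_eval_nonneg fun x ↦ by simpa [expand_eval] using hr_Ici (sq_nonneg x)

theorem isSumSq_of_expSum_nonneg {v : ℝ[ℚ]} (hv : 0 ≤ expSum v) : IsSumSq v := by
  obtain ⟨b, h, hh, r, rfl⟩ := exists_eq_single_mul_aeval v
  have hr (y : ℝ) (hy : 0 < y) : 0 ≤ r.eval y := by
    have hexp : Real.exp (h * (Real.log y / h)) = y := by
      rw [mul_div_cancel₀ _ (by exact_mod_cast hh), Real.exp_log hy]
    have hvx : 0 ≤ expSum (.single b 1 * aeval (.single h 1) r) (Real.log y / h) := hv _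
    rw [map_mul, ContinuousMap.mul_apply, expSum_single_apply, expSum_aeval_single_apply, hexp,
      one_mul] at hvx
    exact nonneg_of_mul_nonneg_right hvx (Real.exp_pos _)
  have hsq (q : ℚ) : (.single q 1 : ℝ[ℚ]) = .single (q / 2) 1 ^ 2 := by
    simp [AddMonoidAlgebra.single_pow, mul_div_cancel₀]
  rw [hsq b, hsq h, ← expand_aeval]
  exact (IsSquare.sq _).isSumSq.mul (isSumSq_map _ (isSumSq_expand_two_of_eval_nonneg hr))

theorem tendsto_expSum_single_one_add_single_neg_one :
    Tendsto (expSum (.single 1 1 + .single (-1) 1)) (cocompact ℝ) atTop := by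
  have hsum (x : ℝ) : expSum (.single 1 1 + .single (-1) 1) x = Real.exp x + Real.exp (-x) := by
    simp
  simp only [funext hsum, cocompact_eq_atBot_atTop, tendsto_sup]
  constructor
  · refine tendsto_atTop_mono (fun x ↦ le_add_of_nonneg_left (Real.exp_nonneg x)) ?_
    exact Real.tendsto_exp_atTop.comp tendsto_neg_atBot_atTop
  · refine tendsto_atTop_mono (fun x ↦ le_add_of_nonneg_right (Real.exp_nonneg (-x))) ?_
    exact Real.tendsto_exp_atTop

/-- The linear functional on `ℝ[ℚ]` with values `f q` at the monomials: it gives the integrals of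
the exponential sums against any measure with Laplace transform `f`. -/
noncomputable def laplaceFunctional (f : ℝ → ℝ) : ℝ[ℚ] →ₗ[ℝ] ℝ :=
  (AddMonoidAlgebra.basis ℚ ℝ).constr ℝ fun q ↦ f q

theorem laplaceFunctional_single (f : ℝ → ℝ) (q : ℚ) (c : ℝ) :
    laplaceFunctional f (.single q c) = c * f q := by
  simp [laplaceFunctional, Module.Basis.constr_apply, AddMonoidAlgebra.basis]

end ExponentialSums

section MomentGeneratingFunctions

open ProbabilityTheory

theorem measure_eq_of_mgf_id_eq {σ τ : Measure ℝ} [IsFiniteMeasure τ]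
    (hσ : 0 ∈ interior (integrableExpSet id σ)) (hmgf : mgf id σ = mgf id τ) : σ = τ := by
  have hσ_zero : 0 ∈ integrableExpSet id σ := interior_subset hσ
  have : IsFiniteMeasure σ := (integrable_const_iff_isFiniteMeasure one_ne_zero).1 <| by
    simpa [integrableExpSet] using hσ_zero
  have hzero : σ = 0 ↔ τ = 0 := by
    have hmass : σ.real Set.univ = τ.real Set.univ := by simpa using congrFun hmgf 0
    rw [← Measure.measure_univ_eq_zero, ← Measure.measure_univ_eq_zero,
      ← measureReal_eq_zero_iff, ← measureReal_eq_zero_iff, hmass]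
  refine Measure.ext_of_charFun (funext fun t ↦ ?_)
  rw [← complexMGF_id_mul_I, ← complexMGF_id_mul_I]
  exact eqOn_complexMGF_of_mgf' hmgf hzero (by simpa using hσ)

theorem integrable_exp_mul_of_forall_rat {σ : Measure ℝ}
    (hσ : ∀ q : ℚ, Integrable (fun x ↦ Real.exp (q * x)) σ) (t : ℝ) :
    Integrable (fun x ↦ Real.exp (t * x)) σ := by
  obtain ⟨a, ha⟩ := exists_rat_lt t
  obtain ⟨b, hb⟩ := exists_rat_gt t
  exact integrable_exp_mul_of_le_of_le (X := id) (hσ a) (hσ b) ha.le hb.le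

end MomentGeneratingFunctions

namespace ExponentiallyConvex

variable {f : ℝ → ℝ}

theorem sum_nonneg (hf : ExponentiallyConvex f) {ι : Type*} (s : Finset ι) (t ξ : ι → ℝ) :
    0 ≤ ∑ i ∈ s, ∑ j ∈ s, ξ i * ξ j * f (t i + t j) := by
  have hfin := hf.2.2 s.card (fun k ↦ t (s.equivFin.symm k)) fun k ↦ ξ (s.equivFin.symm k)
  have hreindex (F : ι → ℝ) : ∑ i ∈ s, F i = ∑ k, F (s.equivFin.symm k) := by
    rw [s.equivFin.symm.sum_comp (fun i : s ↦ F i), Finset.sum_coe_sort]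
  simp only [Complex.conj_ofReal] at hfin
  norm_cast at hfin
  simpa only [hreindex, mul_comm, mul_left_comm] using hfin

theorem laplaceFunctional_mul_self_nonneg (hf : ExponentiallyConvex f) (a : ℝ[ℚ]) :
    0 ≤ laplaceFunctional f (a * a) := by
  rw [AddMonoidAlgebra.mul_def]
  simp only [Finsupp.sum, map_sum, laplaceFunctional_single]
  simpa using hf.sum_nonneg a.coeff.support (fun q ↦ q) a.coeff

theorem laplaceFunctional_nonneg_of_isSumSq (hf : ExponentiallyConvex f) {v : ℝ[ℚ]}
    (hv : IsSumSq v) : 0 ≤ laplaceFunctional f v := by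
  induction hv with
  | zero => simp
  | sq_add a _ ih =>
    simpa only [map_add] using add_nonneg (hf.laplaceFunctional_mul_self_nonneg a) ih

theorem exists_measure_forall_rat (hf : ExponentiallyConvex f) :
    ∃ σ : Measure ℝ, ∀ q : ℚ,
      Integrable (fun x ↦ Real.exp (q * x)) σ ∧ ∫ x, Real.exp (q * x) ∂σ = f q := by
  obtain ⟨σ, hσ⟩ := exists_measure_forall_integral_eq expSum (laplaceFunctional f)
    (fun _ hv ↦ hf.laplaceFunctional_nonneg_of_isSumSq (isSumSq_of_expSum_nonneg hv))
    tendsto_expSum_single_one_add_single_neg_one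
  refine ⟨σ, fun q ↦ ?_⟩
  have hcoe : ⇑(expSum (.single q 1)) = fun x ↦ Real.exp (q * x) := funext fun x ↦ by simp
  simpa only [hcoe, laplaceFunctional_single, one_mul] using hσ (.single q 1)

end ExponentiallyConvex

open MeasureTheory in
theorem expConvex_laplace_representation (f : ℝ → ℝ) (hf : ExponentiallyConvex f) :
    ∃! σ : Measure ℝ,
      (∀ t : ℝ, Integrable (fun μ : ℝ => Real.exp (t * μ)) σ) ∧
        ∀ t : ℝ, f t = ∫ μ : ℝ, Real.exp (t * μ) ∂σ := by
  obtain ⟨σ, hσ⟩ := hf.exists_measure_forall_rat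
  have hint : ∀ t : ℝ, Integrable (fun x ↦ Real.exp (t * x)) σ :=
    integrable_exp_mul_of_forall_rat fun q ↦ (hσ q).1
  have hcont : Continuous fun t : ℝ ↦ ∫ x, Real.exp (t * x) ∂σ :=
    ProbabilityTheory.continuous_mgf (X := id) hint
  have hf_eq : f = fun t ↦ ∫ x, Real.exp (t * x) ∂σ :=
    Rat.denseRange_cast.equalizer hf.1 hcont (funext fun q ↦ (hσ q).2.symm)
  refine ⟨σ, ⟨hint, congrFun hf_eq⟩, ?_⟩
  rintro τ ⟨hτ_int, hτ⟩
  have : IsFiniteMeasure σ :=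
    (integrable_const_iff_isFiniteMeasure one_ne_zero).1 (by simpa using hint 0)
  refine measure_eq_of_mgf_id_eq ?_ (funext fun t ↦ ?_)
  · have hτ_univ : ProbabilityTheory.integrableExpSet id τ = Set.univ :=
      Set.eq_univ_of_forall hτ_int
    simp [hτ_univ]
  · exact (hτ t).symm.trans (congrFun hf_eq t)
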